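/- Suppose Assumptions A1 and A2 hold, V > 0, a C-approximate policy is run over an infinite horizon with all queues initially empty, and X is closed. Then the infinite-horizon constraints are satisfied: limsup_{t→∞} [ȳ_l(t) + g_l(x̄(t))] ≤ 0 for all l ∈ {1,…,L}; limsup_{t→∞} [ā_k(t) − b̄_k(t)] ≤ 0 for all k ∈ {1,…,K}; and for any subsequence of times {t_i} along which x̄(t_i) converges, the limit lim_{t_i→∞} x̄(t_i) lies in X. -/

import Mathlib

/-- The "drift-plus-penalty" expression `E_t(α,γ)` whose (approximate) per-slot
minimization defines the universal scheduling algorithm. -/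
noncomputable def driftExpr {Act Ω : Type*} {K M L : ℕ}
    (ahat bhat : Fin K → Act → Ω → ℝ) (xhat : Fin M → Act → Ω → ℝ)
    (y0hat : Act → Ω → ℝ) (yhat : Fin L → Act → Ω → ℝ)
    (g : Fin L → (Fin M → ℝ) → ℝ) (f : (Fin M → ℝ) → ℝ) (V : ℝ)
    (w : Ω) (Zv : Fin L → ℝ) (Qv : Fin K → ℝ) (Hv : Fin M → ℝ)
    (a : Act) (γ : Fin M → ℝ) : ℝ :=
  V * y0hat a w + V * f γ
    + ∑ l, Zv l * (yhat l a w + g l γ)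
    + ∑ k, Qv k * (ahat k a w - bhat k a w)
    + ∑ m, Hv m * (γ m - xhat m a w)

lemma aux_limsup (u v : ℕ → ℝ) (c : ℝ) (h0 : ∀ᶠ t in Filter.atTop, c ≤ u t)
    (h1 : ∀ᶠ t in Filter.atTop, u t ≤ v t) (hv : Filter.Tendsto v Filter.atTop (nhds 0)) :
    Filter.limsup u Filter.atTop ≤ 0 := by
  rw [← hv.limsup_eq]
  refine Filter.limsup_le_limsup h1 ?_ hv.isBoundedUnder_le
  exact Filter.IsBoundedUnder.isCoboundedUnder_le ⟨c, by simpa using h0⟩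

lemma aux_tendsto (D c : ℝ) :
    Filter.Tendsto (fun t : ℕ => c * (Real.sqrt (D * t) / t)) Filter.atTop (nhds 0) := by
  have h1 : Filter.Tendsto (fun t : ℕ => c * (Real.sqrt D * (Real.sqrt (t : ℝ))⁻¹))
      Filter.atTop (nhds (c * (Real.sqrt D * 0))) := by
    refine (Filter.Tendsto.const_mul _ ?_).const_mul _
    exact tendsto_inv_atTop_zero.comp (Real.tendsto_sqrt_atTop.comp tendsto_natCast_atTop_atTop)
  simp only [mul_zero] at h1
  refine h1.congr fun t => ?_
  rw [Real.sqrt_mul' _ (Nat.cast_nonneg t), mul_div_assoc, Real.sqrt_div_self', one_div]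

lemma aux_Q (q a b : ℝ) (hq : 0 ≤ q) (ha : 0 ≤ a) (hb : 0 ≤ b) :
    (max (q - b) 0 + a) ^ 2 ≤ q ^ 2 + (b ^ 2 + a ^ 2) + 2 * (q * (a - b)) := by
  rcases le_total (q - b) 0 with h | h
  · rw [max_eq_right h]
    nlinarith [sq_nonneg (q - b), mul_nonneg hq ha]
  · rw [max_eq_left h]
    nlinarith [mul_nonneg ha hb]

lemma aux_Z (z y : ℝ) : (max (z + y) 0) ^ 2 ≤ z ^ 2 + y ^ 2 + 2 * (z * y) := by
  rcases le_total (z + y) 0 with h | h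
  · rw [max_eq_right h]
    nlinarith [sq_nonneg (z + y)]
  · rw [max_eq_left h]
    nlinarith

/-- Infinite-horizon constraint satisfaction: under Assumptions A1 and A2, a
`C`-approximate policy started from empty queues, with `X` closed, satisfies
`limsup_{t→∞}[ȳ_l(t) + g_l(x̄(t))] ≤ 0` for all `l`,
`limsup_{t→∞}[ā_k(t) − b̄_k(t)] ≤ 0` for all `k`, and every limit of `x̄` along a
subsequence of times lies in `X`. -/
theorem stmt_12
    {Ω Act : Type*} (ω : ℕ → Ω) (A : Ω → Set Act) (hAne : ∀ w, (A w).Nonempty)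
    (K M L : ℕ) (hK : 0 < K) (hM : 0 < M) (hL : 0 < L)
    (ahat bhat : Fin K → Act → Ω → ℝ) (xhat : Fin M → Act → Ω → ℝ)
    (y0hat : Act → Ω → ℝ) (yhat : Fin L → Act → Ω → ℝ)
    (amax bmax : Fin K → ℝ) (xmin xmax : Fin M → ℝ)
    (y0min y0max : ℝ) (ymin ymax : Fin L → ℝ)
    -- Assumption A1 (boundedness)
    (hA1a : ∀ (w : Ω) (a' : Act), a' ∈ A w → ∀ k, 0 ≤ ahat k a' w ∧ ahat k a' w ≤ amax k)
    (hA1b : ∀ (w : Ω) (a' : Act), a' ∈ A w → ∀ k, 0 ≤ bhat k a' w ∧ bhat k a' w ≤ bmax k)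
    (hA1x : ∀ (w : Ω) (a' : Act), a' ∈ A w → ∀ m, xmin m ≤ xhat m a' w ∧ xhat m a' w ≤ xmax m)
    (hA1y0 : ∀ (w : Ω) (a' : Act), a' ∈ A w → y0min ≤ y0hat a' w ∧ y0hat a' w ≤ y0max)
    (hA1y : ∀ (w : Ω) (a' : Act), a' ∈ A w → ∀ l, ymin l ≤ yhat l a' w ∧ yhat l a' w ≤ ymax l)
    -- the convex set X and the cost functions f, g_l on the box
    (X : Set (Fin M → ℝ)) (hX : Convex ℝ X) (hXc : IsClosed X)
    (f : (Fin M → ℝ) → ℝ) (g : Fin L → (Fin M → ℝ) → ℝ)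
    (fmin fmax : ℝ) (gmin gmax : Fin L → ℝ) (β : Fin L → Fin M → ℝ)
    (hβ : ∀ l m, 0 ≤ β l m)
    (hfconv : ConvexOn ℝ {x : Fin M → ℝ | ∀ m, xmin m ≤ x m ∧ x m ≤ xmax m} f)
    (hfcont : ContinuousOn f {x : Fin M → ℝ | ∀ m, xmin m ≤ x m ∧ x m ≤ xmax m})
    (hfbd : ∀ x ∈ {x : Fin M → ℝ | ∀ m, xmin m ≤ x m ∧ x m ≤ xmax m},
      fmin ≤ f x ∧ f x ≤ fmax)
    (hgconv : ∀ l, ConvexOn ℝ {x : Fin M → ℝ | ∀ m, xmin m ≤ x m ∧ x m ≤ xmax m} (g l))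
    (hgcont : ∀ l, ContinuousOn (g l) {x : Fin M → ℝ | ∀ m, xmin m ≤ x m ∧ x m ≤ xmax m})
    (hgbd : ∀ l, ∀ x ∈ {x : Fin M → ℝ | ∀ m, xmin m ≤ x m ∧ x m ≤ xmax m},
      gmin l ≤ g l x ∧ g l x ≤ gmax l)
    (hglip : ∀ (l : Fin L) (x y : Fin M → ℝ),
      (∀ m, xmin m ≤ x m ∧ x m ≤ xmax m) →
      (∀ m, xmin m ≤ x m + y m ∧ x m + y m ≤ xmax m) →
      g l (x + y) ≤ g l x + ∑ m, β l m * |y m|)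
    -- Assumption A2
    (hA2 : ∀ t, ∃ a' ∈ A (ω t),
      (∀ l, yhat l a' (ω t) + g l (fun m => xhat m a' (ω t)) ≤ 0) ∧
      (∀ k, ahat k a' (ω t) ≤ bhat k a' (ω t)) ∧
      (fun m => xhat m a' (ω t)) ∈ X)
    -- parameters
    (V C B : ℝ) (hV : 0 < V) (hC : 0 ≤ C)
    (hB : ∀ (t : ℕ) (a' : Act) (γ' : Fin M → ℝ), a' ∈ A (ω t) → γ' ∈ X →
      (∀ m, xmin m ≤ γ' m ∧ γ' m ≤ xmax m) →
      (1 / 2) * ∑ l, (yhat l a' (ω t) + g l γ') ^ 2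
        + (1 / 2) * ∑ k, ((bhat k a' (ω t)) ^ 2 + (ahat k a' (ω t)) ^ 2)
        + (1 / 2) * ∑ m, (γ' m - xhat m a' (ω t)) ^ 2 ≤ B)
    -- the C-approximate policy and the queues (initially empty)
    (α : ℕ → Act) (γ : ℕ → Fin M → ℝ)
    (hα : ∀ t, α t ∈ A (ω t)) (hγX : ∀ t, γ t ∈ X)
    (hγbox : ∀ t m, xmin m ≤ γ t m ∧ γ t m ≤ xmax m)
    (Q : Fin K → ℕ → ℝ) (Z : Fin L → ℕ → ℝ) (H : Fin M → ℕ → ℝ)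
    (hQ0 : ∀ k, Q k 0 = 0) (hZ0 : ∀ l, Z l 0 = 0) (hH0 : ∀ m, H m 0 = 0)
    (hQ : ∀ k t, Q k (t + 1) = max (Q k t - bhat k (α t) (ω t)) 0 + ahat k (α t) (ω t))
    (hZ : ∀ l t, Z l (t + 1) = max (Z l t + yhat l (α t) (ω t) + g l (γ t)) 0)
    (hH : ∀ m t, H m (t + 1) = H m t + γ t m - xhat m (α t) (ω t))
    (hCapprox : ∀ (t : ℕ) (a' : Act) (γ' : Fin M → ℝ), a' ∈ A (ω t) → γ' ∈ X →
      (∀ m, xmin m ≤ γ' m ∧ γ' m ≤ xmax m) →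
      driftExpr ahat bhat xhat y0hat yhat g f V (ω t)
          (fun l => Z l t) (fun k => Q k t) (fun m => H m t) (α t) (γ t)
        ≤ driftExpr ahat bhat xhat y0hat yhat g f V (ω t)
          (fun l => Z l t) (fun k => Q k t) (fun m => H m t) a' γ' + C)
    -- the constant C₀
    (C₀ : ℝ)
    (hC₀ : C₀ = Real.sqrt (2 * ((B + C) / V + (y0max - y0min) + (fmax - fmin))))
 :
    (∀ l, Filter.limsup (fun t : ℕ =>
        (∑ τ ∈ Finset.range t, yhat l (α τ) (ω τ)) / t
          + g l (fun m => (∑ τ ∈ Finset.range t, xhat m (α τ) (ω τ)) / t))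
      Filter.atTop ≤ 0) ∧
    (∀ k, Filter.limsup (fun t : ℕ =>
        (∑ τ ∈ Finset.range t, ahat k (α τ) (ω τ)) / t
          - (∑ τ ∈ Finset.range t, bhat k (α τ) (ω τ)) / t)
      Filter.atTop ≤ 0) ∧
    (∀ (ti : ℕ → ℕ), StrictMono ti → ∀ xl : Fin M → ℝ,
      Filter.Tendsto
        (fun i => (fun m => (∑ τ ∈ Finset.range (ti i), xhat m (α τ) (ω τ)) / (ti i)))
        Filter.atTop (nhds xl) → xl ∈ X) := by
  have hQn : ∀ k t, 0 ≤ Q k t := by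
    intro k t
    cases t with
    | zero => rw [hQ0]
    | succ t =>
      rw [hQ]
      exact add_nonneg (le_max_right _ _) (hA1a _ _ (hα t) k).1
  have hZn : ∀ l t, 0 ≤ Z l t := by
    intro l t
    cases t with
    | zero => rw [hZ0]
    | succ t =>
      rw [hZ]
      exact le_max_right _ _
  obtain ⟨D, hD⟩ : ∃ D, D = 2 * (B + C + V * (y0max - y0min) + V * (fmax - fmin)) := ⟨_, rfl⟩
  have hstep : ∀ t, ∑ l, Z l (t+1) ^ 2 + ∑ k, Q k (t+1) ^ 2 + ∑ m, H m (t+1) ^ 2 ≤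
      ∑ l, Z l t ^ 2 + ∑ k, Q k t ^ 2 + ∑ m, H m t ^ 2 + D := by
    intro t
    obtain ⟨a', ha', h1, h2, h3⟩ := hA2 t
    have hbox' := hA1x _ _ ha'
    have hE := hCapprox t a' _ ha' h3 hbox'
    have hBt := hB t (α t) (γ t) (hα t) (hγX t) (hγbox t)
    unfold driftExpr at hE
    have e1 : ∑ l, Z l t * (yhat l a' (ω t) + g l (fun m => xhat m a' (ω t))) ≤ 0 :=
      Finset.sum_nonpos fun l _ => mul_nonpos_of_nonneg_of_nonpos (hZn l t) (h1 l)
    have e2 : ∑ k, Q k t * (ahat k a' (ω t) - bhat k a' (ω t)) ≤ 0 :=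
      Finset.sum_nonpos fun k _ => mul_nonpos_of_nonneg_of_nonpos (hQn k t)
        (sub_nonpos.2 (h2 k))
    have e3 : ∑ m, H m t * (xhat m a' (ω t) - xhat m a' (ω t)) = 0 := by simp
    have q1 : ∑ l, Z l (t+1) ^ 2 ≤ ∑ l, Z l t ^ 2 + ∑ l, (yhat l (α t) (ω t) + g l (γ t)) ^ 2
        + 2 * ∑ l, Z l t * (yhat l (α t) (ω t) + g l (γ t)) := by
      rw [Finset.mul_sum, ← Finset.sum_add_distrib, ← Finset.sum_add_distrib]
      refine Finset.sum_le_sum fun l _ => ?_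
      rw [hZ, add_assoc]
      exact aux_Z _ _
    have q2 : ∑ k, Q k (t+1) ^ 2 ≤ ∑ k, Q k t ^ 2
        + ∑ k, ((bhat k (α t) (ω t)) ^ 2 + (ahat k (α t) (ω t)) ^ 2)
        + 2 * ∑ k, Q k t * (ahat k (α t) (ω t) - bhat k (α t) (ω t)) := by
      rw [Finset.mul_sum, ← Finset.sum_add_distrib, ← Finset.sum_add_distrib]
      refine Finset.sum_le_sum fun k _ => ?_
      rw [hQ]
      exact aux_Q _ _ _ (hQn k t) (hA1a _ _ (hα t) k).1 (hA1b _ _ (hα t) k).1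
    have q3 : ∑ m, H m (t+1) ^ 2 = ∑ m, H m t ^ 2 + ∑ m, (γ t m - xhat m (α t) (ω t)) ^ 2
        + 2 * ∑ m, H m t * (γ t m - xhat m (α t) (ω t)) := by
      rw [Finset.mul_sum, ← Finset.sum_add_distrib, ← Finset.sum_add_distrib]
      refine Finset.sum_congr rfl fun m _ => ?_
      rw [hH]
      ring
    have f1 := mul_le_mul_of_nonneg_left (hA1y0 _ _ (hα t)).1 hV.le
    have f2 := mul_le_mul_of_nonneg_left (hA1y0 _ _ ha').2 hV.le
    have f3 := mul_le_mul_of_nonneg_left (hfbd (γ t) (hγbox t)).1 hV.le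
    have f4 := mul_le_mul_of_nonneg_left (hfbd (fun m => xhat m a' (ω t)) hbox').2 hV.le
    rw [hD]
    linarith
  have hLyap : ∀ t : ℕ, ∑ l, Z l t ^ 2 + ∑ k, Q k t ^ 2 + ∑ m, H m t ^ 2 ≤ D * t := by
    intro t
    induction t with
    | zero => simp [hZ0, hQ0, hH0]
    | succ t ih =>
      have := hstep t
      push_cast
      linarith
  have nZ : ∀ t, 0 ≤ ∑ l, Z l t ^ 2 := fun t => Finset.sum_nonneg fun l _ => sq_nonneg _
  have nQ : ∀ t, 0 ≤ ∑ k, Q k t ^ 2 := fun t => Finset.sum_nonneg fun l _ => sq_nonneg _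
  have nH : ∀ t, 0 ≤ ∑ m, H m t ^ 2 := fun t => Finset.sum_nonneg fun l _ => sq_nonneg _
  have bZ : ∀ l (t : ℕ), Z l t ≤ Real.sqrt (D * t) := by
    intro l t
    have h : Z l t ^ 2 ≤ ∑ l, Z l t ^ 2 :=
      Finset.single_le_sum (f := fun l => Z l t ^ 2) (fun _ _ => sq_nonneg _) (Finset.mem_univ l)
    exact Real.le_sqrt_of_sq_le (by linarith [hLyap t, nQ t, nH t])
  have bQ : ∀ k (t : ℕ), Q k t ≤ Real.sqrt (D * t) := by
    intro l t
    have h : Q l t ^ 2 ≤ ∑ l, Q l t ^ 2 :=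
      Finset.single_le_sum (f := fun l => Q l t ^ 2) (fun _ _ => sq_nonneg _) (Finset.mem_univ l)
    exact Real.le_sqrt_of_sq_le (by linarith [hLyap t, nZ t, nH t])
  have bH : ∀ m (t : ℕ), |H m t| ≤ Real.sqrt (D * t) := by
    intro l t
    have h : H l t ^ 2 ≤ ∑ l, H l t ^ 2 :=
      Finset.single_le_sum (f := fun l => H l t ^ 2) (fun _ _ => sq_nonneg _) (Finset.mem_univ l)
    exact Real.abs_le_sqrt (by linarith [hLyap t, nZ t, nQ t])
  have sZ : ∀ l t, ∑ τ ∈ Finset.range t, yhat l (α τ) (ω τ) + ∑ τ ∈ Finset.range t, g l (γ τ)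
      ≤ Z l t := by
    intro l t
    induction t with
    | zero => simp [hZ0]
    | succ t ih =>
      rw [Finset.sum_range_succ, Finset.sum_range_succ, hZ]
      have := le_max_left (Z l t + yhat l (α t) (ω t) + g l (γ t)) 0
      linarith
  have sQ : ∀ k t, ∑ τ ∈ Finset.range t, ahat k (α τ) (ω τ) - ∑ τ ∈ Finset.range t, bhat k (α τ) (ω τ)
      ≤ Q k t := by
    intro k t
    induction t with
    | zero => simp [hQ0]
    | succ t ih =>
      rw [Finset.sum_range_succ, Finset.sum_range_succ, hQ]
      have := le_max_left (Q k t - bhat k (α t) (ω t)) 0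
      linarith
  have sH : ∀ m t, H m t = ∑ τ ∈ Finset.range t, γ τ m - ∑ τ ∈ Finset.range t, xhat m (α τ) (ω τ) := by
    intro m t
    induction t with
    | zero => simp [hH0]
    | succ t ih =>
      rw [Finset.sum_range_succ, Finset.sum_range_succ, hH, ih]
      ring
  -- averages
  have avg_bd : ∀ (u : ℕ → ℝ) (lo hi : ℝ), (∀ τ, lo ≤ u τ ∧ u τ ≤ hi) → ∀ t : ℕ, 0 < t →
      lo ≤ (∑ τ ∈ Finset.range t, u τ) / t ∧ (∑ τ ∈ Finset.range t, u τ) / t ≤ hi := by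
    intro u lo hi hu t ht
    have ht' : (0:ℝ) < t := by exact_mod_cast ht
    have l1 := Finset.card_nsmul_le_sum (Finset.range t) u lo fun τ _ => (hu τ).1
    have l2 := Finset.sum_le_card_nsmul (Finset.range t) u hi fun τ _ => (hu τ).2
    simp only [Finset.card_range, nsmul_eq_mul] at l1 l2
    rw [le_div_iff₀ ht', div_le_iff₀ ht']
    constructor <;> linarith
  have hw : ∀ t : ℕ, 0 < t → ∑ _τ ∈ Finset.range t, (1 / (t:ℝ)) = 1 := by
    intro t ht
    have ht' : (t:ℝ) ≠ 0 := by exact_mod_cast ht.ne'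
    simp [ht']
  have gavg : ∀ t : ℕ, ∑ τ ∈ Finset.range t, (1 / (t:ℝ)) • γ τ
      = fun m => (∑ τ ∈ Finset.range t, γ τ m) / t := by
    intro t
    ext m
    simp only [Finset.sum_apply, Pi.smul_apply, smul_eq_mul, ← Finset.mul_sum]
    ring
  have gavgX : ∀ t : ℕ, 0 < t → (fun m => (∑ τ ∈ Finset.range t, γ τ m) / t) ∈ X := by
    intro t ht
    rw [← gavg t]
    exact hX.sum_mem (fun _ _ => by positivity) (hw t ht) fun τ _ => hγX τ
  have key : ∀ (m : Fin M) (t : ℕ), (∑ τ ∈ Finset.range t, γ τ m) / (t:ℝ)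
      = (∑ τ ∈ Finset.range t, xhat m (α τ) (ω τ)) / t + H m t / t := by
    intro m t
    rw [sH]
    ring
  refine ⟨fun l => ?_, fun k => ?_, fun ti hti xl hxl => ?_⟩
  · refine aux_limsup _ _ (ymin l + gmin l) ?_ ?_ (aux_tendsto D (1 + ∑ m, β l m))
    · filter_upwards [Filter.eventually_gt_atTop 0] with t ht
      have h1 := (avg_bd _ _ _ (fun τ => hA1y _ _ (hα τ) l) t ht).1
      have h2 := (hgbd l (fun m => (∑ τ ∈ Finset.range t, xhat m (α τ) (ω τ)) / t)
        (fun m => avg_bd _ _ _ (fun τ => hA1x _ _ (hα τ) m) t ht)).1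
      linarith
    · filter_upwards [Filter.eventually_gt_atTop 0] with t ht
      have ht' : (0:ℝ) < t := by exact_mod_cast ht
      have hj := (hgconv l).map_sum_le (t := Finset.range t) (w := fun _ => 1 / (t:ℝ)) (p := γ)
        (fun _ _ => by positivity) (hw t ht) (fun τ _ => hγbox τ)
      rw [gavg t] at hj
      simp only [smul_eq_mul, ← Finset.mul_sum] at hj
      have hx : ∀ m, (∑ τ ∈ Finset.range t, γ τ m) / (t:ℝ) + -(H m t / t)
          = (∑ τ ∈ Finset.range t, xhat m (α τ) (ω τ)) / t := by
        intro m
        rw [key]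
        ring
      have hlip := hglip l (fun m => (∑ τ ∈ Finset.range t, γ τ m) / (t:ℝ))
        (fun m => -(H m t / t)) (fun m => avg_bd _ _ _ (fun τ => hγbox τ m) t ht)
        (fun m => by
          simp only [hx]
          exact avg_bd _ _ _ (fun τ => hA1x _ _ (hα τ) m) t ht)
      have hx' : (fun m => (∑ τ ∈ Finset.range t, γ τ m) / (t:ℝ)) + (fun m => -(H m t / t))
          = fun m => (∑ τ ∈ Finset.range t, xhat m (α τ) (ω τ)) / (t:ℝ) := funext hx
      rw [hx'] at hlip
      have hs : ∑ m, β l m * |(-(H m t / (t:ℝ)))|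
          ≤ (∑ m, β l m) * (Real.sqrt (D * t) / t) := by
        rw [Finset.sum_mul]
        refine Finset.sum_le_sum fun m _ => mul_le_mul_of_nonneg_left ?_ (hβ l m)
        rw [abs_neg, abs_div, abs_of_pos ht']
        exact div_le_div_of_nonneg_right (bH m t) ht'.le
      have hz := div_le_div_of_nonneg_right ((sZ l t).trans (bZ l t)) ht'.le
      rw [add_div] at hz
      rw [one_div, inv_mul_eq_div] at hj
      rw [add_mul, one_mul]
      linarith
  · refine aux_limsup _ _ (0 - bmax k) ?_ ?_ (aux_tendsto D 1)
    · filter_upwards [Filter.eventually_gt_atTop 0] with t ht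
      have h1 := (avg_bd _ _ _ (fun τ => hA1a _ _ (hα τ) k) t ht).1
      have h2 := (avg_bd _ _ _ (fun τ => hA1b _ _ (hα τ) k) t ht).2
      linarith
    · filter_upwards [Filter.eventually_gt_atTop 0] with t ht
      have ht' : (0:ℝ) < t := by exact_mod_cast ht
      have hz := div_le_div_of_nonneg_right ((sQ k t).trans (bQ k t)) ht'.le
      rw [sub_div] at hz
      rw [one_mul]
      exact hz
  · have hHt : ∀ m, Filter.Tendsto (fun t : ℕ => H m t / (t:ℝ)) Filter.atTop (nhds 0) := by
      intro m
      refine squeeze_zero_norm (fun t => ?_) (aux_tendsto D 1)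
      rw [one_mul, Real.norm_eq_abs, abs_div, Nat.abs_cast]
      exact div_le_div_of_nonneg_right (bH m t) (Nat.cast_nonneg t)
    have hlim : Filter.Tendsto (fun i => (fun m => (∑ τ ∈ Finset.range (ti i), γ τ m) / ((ti i : ℕ) : ℝ)))
        Filter.atTop (nhds xl) := by
      rw [tendsto_pi_nhds] at hxl ⊢
      intro m
      have := (hxl m).add ((hHt m).comp hti.tendsto_atTop)
      rw [add_zero] at this
      refine this.congr fun i => ?_
      simp only [Function.comp, key]
    refine hXc.mem_of_tendsto hlim ?_
    filter_upwards [hti.tendsto_atTop.eventually (Filter.eventually_gt_atTop 0)] with i hi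
    exact gavgX _ hi
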